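/- For every integer k ≥ 1, the left-normed commutator word w_k = [x_1, …, x_k] is good. -/

import Mathlib

open scoped Classical

/-- The commutator `[x, y] = x⁻¹y⁻¹xy` (the convention used in the paper). -/
def pcomm {G : Type*} [Group G] (x y : G) : G := x⁻¹ * y⁻¹ * x * y

/-- The left-normed commutator word `w_k = [x₁, …, x_k] ∈ F_k`,
defined inductively by `w₁ = x₁` and `w_{j+1} = [w_j, x_{j+1}]`. -/
def commWord : (k : ℕ) → FreeGroup (Fin k)
  | 0 => 1
  | 1 => FreeGroup.of 0
  | (k + 2) =>
      pcomm (FreeGroup.map Fin.castSucc (commWord (k + 1))) (FreeGroup.of (Fin.last (k + 1)))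

/-- The left-normed commutator `[g₁, …, g_k]` of group elements. -/
def commElt {G : Type*} [Group G] : {k : ℕ} → (Fin k → G) → G
  | 0, _ => 1
  | 1, f => f 0
  | (_ + 2), f => pcomm (commElt (fun i => f i.castSucc)) (f (Fin.last _))

/-- The word `[x₁², x₂, …, x_k] ∈ F_k`, defined inductively by
`u₁ = x₁²` and `u_{j+1} = [u_j, x_{j+1}]`. -/
def sqCommWord : (k : ℕ) → FreeGroup (Fin k)
  | 0 => 1
  | 1 => FreeGroup.of 0 ^ 2
  | (k + 2) =>
      pcomm (FreeGroup.map Fin.castSucc (sqCommWord (k + 1))) (FreeGroup.of (Fin.last (k + 1)))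

/-- `P_{G,w}(g) = |w_G⁻¹(g)| / |G|^k`, the probability that the word map of `w`
takes the value `g` on a uniformly random `k`-tuple. -/
noncomputable def wordProb {k : ℕ} {G : Type*} [Group G] (w : FreeGroup (Fin k)) (g : G) : ℝ :=
  (Nat.card {f : Fin k → G // FreeGroup.lift f w = g} : ℝ) / (Nat.card G : ℝ) ^ k

/-- A group is residually finite if every nontrivial element is excluded by
some normal subgroup of finite index. -/
def ResiduallyFinite (Γ : Type*) [Group Γ] : Prop :=
  ∀ g : Γ, g ≠ 1 → ∃ Δ : Subgroup Γ, Δ.Normal ∧ Δ.FiniteIndex ∧ g ∉ Δ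

/-- A word `w ≠ 1` is a probabilistic identity of `Γ` if for some `ε > 0` every
finite quotient `H` of `Γ` satisfies `P_{H,w}(1) ≥ ε`. -/
def IsProbIdentity {k : ℕ} (Γ : Type*) [Group Γ] (w : FreeGroup (Fin k)) : Prop :=
  w ≠ 1 ∧ ∃ ε : ℝ, 0 < ε ∧
    ∀ (Δ : Subgroup Γ) [Δ.Normal], Δ.FiniteIndex → ε ≤ wordProb w (1 : Γ ⧸ Δ)

/-- `G(H)`: the intersection of the kernels of all homomorphisms from `G` to `H`. -/
def kerInt (G H : Type*) [Group G] [Group H] : Subgroup G := ⨅ φ : G →* H, φ.ker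

/-- A word `1 ≠ w ∈ F_k` is good if for every `ε > 0` there is a word `1 ≠ v ∈ F_m`,
depending only on `w` and `ε`, which is an identity of every finite group `G`
satisfying `P_{G,w}(g) ≥ ε` for some `g ∈ G`. -/
def IsGood {k : ℕ} (w : FreeGroup (Fin k)) : Prop :=
  w ≠ 1 ∧ ∀ ε : ℝ, 0 < ε → ∃ (m : ℕ) (v : FreeGroup (Fin m)), v ≠ 1 ∧
    ∀ (G : Type) [Group G] [Finite G],
      (∃ g : G, ε ≤ wordProb w g) → ∀ f : Fin m → G, FreeGroup.lift f v = 1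

/-!
If `w` is good then so is `[w, x]` for a new variable `x`. For fixed `y`, the solutions `x` of
`[y, x] = g` lie in one coset of the centralizer of `y`; if they make up at least a proportion `δ`
of `G`, this centralizer has index at most `1 / δ`, so it contains every `n`-th power, where
`n = ⌊1 / δ⌋!`. Hence, with `C` the centralizer of all `n`-th powers, the probability that
`[w, x] = g` in `G` is at most `δ` plus the probability that `w = 1` in `G ⧸ C`. Taking
`δ = ε / 2`, the quotient `G ⧸ C` satisfies an identity `v` by goodness of `w`, and then `G`
satisfies `[v, xⁿ]`.
-/

theorem pcomm_eq_one_iff_commute {G : Type*} [Group G] {x y : G} :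
    pcomm x y = 1 ↔ Commute x y := by
  rw [pcomm, mul_assoc, ← mul_inv_rev, inv_mul_eq_one, eq_comm, Commute, SemiconjBy]

theorem map_pcomm {G H : Type*} [Group G] [Group H] (φ : G →* H) (x y : G) :
    φ (pcomm x y) = pcomm (φ x) (φ y) := by
  simp only [pcomm, map_mul, map_inv]

theorem lift_map_apply {G α β : Type*} [Group G] (f : β → G) (g : α → β) (w : FreeGroup α) :
    FreeGroup.lift f (FreeGroup.map g w) = FreeGroup.lift (f ∘ g) w := by
  have h : (FreeGroup.lift f).comp (FreeGroup.map g) = FreeGroup.lift (f ∘ g) := by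
    ext a
    simp
  exact DFunLike.congr_fun h w

theorem map_lift_apply {G H α : Type*} [Group G] [Group H] (φ : G →* H) (f : α → G)
    (w : FreeGroup α) : φ (FreeGroup.lift f w) = FreeGroup.lift (φ ∘ f) w := by
  have h : φ.comp (FreeGroup.lift f) = FreeGroup.lift (φ ∘ f) := by
    ext a
    simp
  exact DFunLike.congr_fun h w

theorem lift_pcomm_map_castSucc {G : Type*} [Group G] {k : ℕ} (f : Fin (k + 1) → G)
    (w : FreeGroup (Fin k)) (n : ℕ) :
    FreeGroup.lift f (pcomm (FreeGroup.map Fin.castSucc w) (FreeGroup.of (Fin.last k) ^ n)) =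
      pcomm (FreeGroup.lift (Fin.init f) w) (f (Fin.last k) ^ n) := by
  rw [map_pcomm, lift_map_apply, map_pow, FreeGroup.lift_apply_of]
  rfl

theorem card_lift_mk_eq {G : Type*} [Group G] (C : Subgroup G) [C.Normal] {k : ℕ}
    (w : FreeGroup (Fin k)) (q : G ⧸ C) :
    Nat.card {f : Fin k → G // (FreeGroup.lift f w : G ⧸ C) = q} =
      Nat.card {f : Fin k → G ⧸ C // FreeGroup.lift f w = q} * Nat.card C ^ k := by
  let e : (Fin k → G) ≃ (Fin k → G ⧸ C) × (Fin k → C) :=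
    (Equiv.arrowCongr (Equiv.refl _) Subgroup.groupEquivQuotientProdSubgroup).trans
      (Equiv.arrowProdEquivProdArrow _ _ _)
  have he (f : Fin k → G) : (FreeGroup.lift f w : G ⧸ C) = FreeGroup.lift (e f).1 w :=
    map_lift_apply (QuotientGroup.mk' C) f w
  simp only [he]
  rw [Nat.card_congr ((e.subtypeEquiv fun _ => Iff.rfl).trans
    (Equiv.prodSubtypeFstEquivSubtypeProd (p := fun f => FreeGroup.lift f w = q))),
    Nat.card_prod, Nat.card_fun, Nat.card_fin]

theorem card_lift_pcomm_map_castSucc {G : Type*} [Group G] [Fintype G] {k : ℕ}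
    (w : FreeGroup (Fin k)) (g : G) :
    Nat.card {f : Fin (k + 1) → G // FreeGroup.lift f
        (pcomm (FreeGroup.map Fin.castSucc w) (FreeGroup.of (Fin.last k))) = g} =
      ∑ f : Fin k → G, Nat.card {x : G // pcomm (FreeGroup.lift f w) x = g} := by
  have hlift (f : Fin (k + 1) → G) := lift_pcomm_map_castSucc f w 1
  simp only [pow_one] at hlift
  simp only [hlift, ← Nat.card_sigma]
  exact Nat.card_congr <|
    (((Fin.snocEquiv fun _ => G).symm.trans (Equiv.prodComm _ _)).subtypeEquiv
      fun _ => Iff.rfl).trans <|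
    Equiv.subtypeProdEquivSigmaSubtype fun (f : Fin k → G) x => pcomm (FreeGroup.lift f w) x = g

theorem exists_hom_commute_pow_imp_eq_one.{u} (H : Type u) [Group H] :
    ∃ (W : Type u) (_ : Group W) (φ : H →* W) (t : W),
      ∀ (h : H) (n : ℕ), n ≠ 0 → Commute (φ h) (t ^ n) → h = 1 := by
  -- In the wreath product of `H` with `ℤ`, conjugation by the `n`-th power of the shift `t` moves
  -- the copy of `H` in coordinate `0` to coordinate `n`.
  let shift : Multiplicative ℤ →* MulAut (Multiplicative ℤ → H) := mulAutArrow
  let base : H →* Multiplicative ℤ → H := MonoidHom.mulSingle (fun _ => H) 1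
  let t : Multiplicative ℤ := Multiplicative.ofAdd 1
  refine ⟨(Multiplicative ℤ → H) ⋊[shift] Multiplicative ℤ, inferInstance,
    SemidirectProduct.inl.comp base, SemidirectProduct.inr t, fun h n hn hcomm => ?_⟩
  have hshift : shift (t ^ n) (base h) = base h := by
    apply SemidirectProduct.inl_injective (φ := shift)
    rw [MonoidHom.comp_apply] at hcomm
    rw [SemidirectProduct.inl_aut, map_inv, map_pow, ← hcomm.eq, mul_inv_cancel_right]
  have hcoord : base h ((t ^ n)⁻¹ * 1) = base h 1 := congrFun hshift 1
  have htn : (t ^ n)⁻¹ ≠ 1 := by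
    rw [Ne, inv_eq_one, pow_eq_one_iff_left hn]
    exact ofAdd_eq_one.not.2 one_ne_zero
  calc h = base h 1 := by simp [base]
    _ = base h (t ^ n)⁻¹ := by rw [← hcoord, mul_one]
    _ = 1 := Pi.mulSingle_eq_of_ne (M := fun _ => H) htn h

theorem pcomm_map_castSucc_ne_one {k : ℕ} {w : FreeGroup (Fin k)} (hw : w ≠ 1) {n : ℕ}
    (hn : n ≠ 0) :
    pcomm (FreeGroup.map Fin.castSucc w) (FreeGroup.of (Fin.last k) ^ n) ≠ 1 := by
  obtain ⟨W, _, φ, t, eq_one_of_commute⟩ := exists_hom_commute_pow_imp_eq_one (FreeGroup (Fin k))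
  let f : Fin (k + 1) → W := Fin.snoc (φ ∘ FreeGroup.of) t
  have hinit : FreeGroup.lift (Fin.init f) w = φ w := by
    have hf : Fin.init f = φ ∘ FreeGroup.of := Fin.init_snoc (α := fun _ => W) _ _
    rw [hf, ← map_lift_apply, FreeGroup.lift_of_apply]
  have hlast : f (Fin.last k) = t := Fin.snoc_last (α := fun _ => W) _ _
  intro h
  apply hw
  apply eq_one_of_commute w n hn
  rw [← hinit, ← hlast, ← pcomm_eq_one_iff_commute, ← lift_pcomm_map_castSucc, h, map_one]

/-- The centralizer of the set of `n`-th powers of `G`: the normal subgroup modulo which the last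
variable of a commutator word is removed. -/
def powCentralizer (G : Type*) [Group G] (n : ℕ) : Subgroup G :=
  Subgroup.centralizer (Set.range fun a : G => a ^ n)

theorem mem_powCentralizer {G : Type*} [Group G] {n : ℕ} {y : G} :
    y ∈ powCentralizer G n ↔ ∀ a : G, Commute y (a ^ n) := by
  simp only [powCentralizer, Subgroup.mem_centralizer_iff, Set.forall_mem_range, Commute,
    SemiconjBy, eq_comm]

instance powCentralizer_normal (G : Type*) [Group G] (n : ℕ) : (powCentralizer G n).Normal where
  conj_mem y hy g := by
    refine mem_powCentralizer.2 fun a => ?_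
    have ha : a ^ n = g * (g⁻¹ * a * g) ^ n * g⁻¹ := by
      rw [← conj_pow]
      group
    rw [ha, Commute.conj_iff]
    exact mem_powCentralizer.1 hy _

section Finite

variable {G : Type*} [Group G] [Finite G]

theorem pow_factorial_mem_of_mul_card_le {H : Subgroup G} {δ : ℝ} (hδ : 0 < δ)
    (hH : δ * Nat.card G ≤ Nat.card H) (a : G) : a ^ Nat.factorial ⌊1 / δ⌋₊ ∈ H := by
  have hpos : (0 : ℝ) < Nat.card H := by exact_mod_cast Nat.card_pos
  have hindex : H.index ≤ ⌊1 / δ⌋₊ := by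
    apply Nat.le_floor
    rw [le_div_iff₀' hδ]
    rw [← H.index_mul_card, Nat.cast_mul, ← mul_assoc] at hH
    exact (mul_le_iff_le_one_left hpos).1 hH
  exact H.pow_mem_of_index_ne_zero_of_dvd Subgroup.FiniteIndex.index_ne_zero a
    fun m hm hmH => Nat.dvd_factorial hm (hmH.trans hindex)

theorem card_pcomm_fiber_le_card_centralizer (y g : G) :
    Nat.card {x : G // pcomm y x = g} ≤ Nat.card (Subgroup.centralizer {y}) := by
  rcases isEmpty_or_nonempty {x : G // pcomm y x = g} with _ | ⟨x₀, hx₀⟩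
  · simp
  have mem_centralizer (x : {x : G // pcomm y x = g}) :
      x.1 * x₀⁻¹ ∈ Subgroup.centralizer {y} := by
    have h : x.1⁻¹ * y * x.1 = x₀⁻¹ * y * x₀ := by
      simpa only [pcomm, mul_assoc, mul_right_inj] using x.2.trans hx₀.symm
    rw [Subgroup.mem_centralizer_singleton_iff]
    calc x.1 * x₀⁻¹ * y = x.1 * (x₀⁻¹ * y * x₀) * x₀⁻¹ := by group
      _ = y * (x.1 * x₀⁻¹) := by rw [← h]; group
  refine Nat.card_le_card_of_injective (fun x => (⟨_, mem_centralizer x⟩ :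
    Subgroup.centralizer {y})) fun x x' hxx' => Subtype.ext ?_
  exact mul_right_cancel (congrArg Subtype.val hxx')

theorem card_pcomm_fiber_le_of_notMem {δ : ℝ} (hδ : 0 < δ) {y : G}
    (hy : y ∉ powCentralizer G (Nat.factorial ⌊1 / δ⌋₊)) (g : G) :
    (Nat.card {x : G // pcomm y x = g} : ℝ) ≤ δ * Nat.card G := by
  contrapose! hy
  have hcard : δ * Nat.card G ≤ Nat.card (Subgroup.centralizer {y}) :=
    hy.le.trans (by exact_mod_cast card_pcomm_fiber_le_card_centralizer y g)
  refine mem_powCentralizer.2 fun a => ?_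
  exact (Subgroup.mem_centralizer_singleton_iff.1
    (pow_factorial_mem_of_mul_card_le hδ hcard a)).symm

theorem wordProb_of {k : ℕ} (i : Fin k) (g : G) :
    wordProb (FreeGroup.of i) g = 1 / Nat.card G := by
  have := Fintype.ofFinite G
  have hcard : Nat.card {f : Fin k → G // f i = g} = Nat.card G ^ (k - 1) := by
    simpa [Fintype.card_subtype] using
      Fintype.card_filter_piFinset_const_eq_of_mem Finset.univ i (Finset.mem_univ g)
  have hpow : (Nat.card G : ℝ) ^ k = Nat.card G ^ (k - 1) * Nat.card G := by
    rw [← pow_succ, Nat.sub_add_cancel i.pos]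
  have hG : (Nat.card G : ℝ) ≠ 0 := Nat.cast_ne_zero.2 Nat.card_pos.ne'
  simp only [wordProb, FreeGroup.lift_apply_of, hcard, hpow, Nat.cast_pow]
  field_simp

theorem wordProb_quotient (C : Subgroup G) [C.Normal] {k : ℕ} (w : FreeGroup (Fin k))
    (q : G ⧸ C) :
    wordProb w q = Nat.card {f : Fin k → G // (FreeGroup.lift f w : G ⧸ C) = q} /
      (Nat.card G : ℝ) ^ k := by
  have hC : (Nat.card C : ℝ) ≠ 0 := Nat.cast_ne_zero.2 Nat.card_pos.ne'
  rw [wordProb, card_lift_mk_eq, C.card_eq_card_quotient_mul_card_subgroup, Nat.cast_mul,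
    Nat.cast_mul, mul_pow, Nat.cast_pow, mul_div_mul_right _ _ (pow_ne_zero k hC)]

theorem wordProb_pcomm_map_castSucc_le {k : ℕ} (w : FreeGroup (Fin k)) (g : G) {δ : ℝ}
    (hδ : 0 < δ) :
    wordProb (pcomm (FreeGroup.map Fin.castSucc w) (FreeGroup.of (Fin.last k))) g ≤
      wordProb w (1 : G ⧸ powCentralizer G (Nat.factorial ⌊1 / δ⌋₊)) + δ := by
  have := Fintype.ofFinite G
  set C := powCentralizer G (Nat.factorial ⌊1 / δ⌋₊)
  have hG : (0 : ℝ) < Nat.card G := by exact_mod_cast Nat.card_pos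
  have fiber_le (f : Fin k → G) :
      (Nat.card {x : G // pcomm (FreeGroup.lift f w) x = g} : ℝ) ≤
        (if FreeGroup.lift f w ∈ C then (Nat.card G : ℝ) else 0) + δ * Nat.card G := by
    split_ifs with hf
    · have card_le : (Nat.card {x : G // pcomm (FreeGroup.lift f w) x = g} : ℝ) ≤ Nat.card G := by
        exact_mod_cast Finite.card_subtype_le _
      exact card_le.trans (le_add_of_nonneg_right (by positivity))
    · rw [zero_add]
      exact card_pcomm_fiber_le_of_notMem hδ hf g
  rw [wordProb, card_lift_pcomm_map_castSucc, wordProb_quotient, div_add' _ _ _ (by positivity),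
    div_le_div_iff₀ (by positivity) (by positivity), pow_succ', ← mul_assoc]
  gcongr
  simp only [QuotientGroup.eq_one_iff, Nat.cast_sum]
  calc ∑ f : Fin k → G, (Nat.card {x : G // pcomm (FreeGroup.lift f w) x = g} : ℝ)
      ≤ ∑ f : Fin k → G,
          ((if FreeGroup.lift f w ∈ C then (Nat.card G : ℝ) else 0) + δ * Nat.card G) :=
        Finset.sum_le_sum fun f _ => fiber_le f
    _ = (Nat.card {f : Fin k → G // FreeGroup.lift f w ∈ C} + δ * Nat.card G ^ k) *
          Nat.card G := by
        simp only [Finset.sum_add_distrib, ← Finset.sum_filter, Finset.sum_const,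
          ← Fintype.card_subtype, nsmul_eq_mul, Finset.card_univ, Fintype.card_fun,
          Fintype.card_fin, Nat.card_eq_fintype_card, Nat.cast_pow]
        ring

end Finite

theorem isGood_of {k : ℕ} (i : Fin k) : IsGood (FreeGroup.of i) := by
  refine ⟨FreeGroup.of_ne_one i, fun ε hε => ⟨1, FreeGroup.of 0 ^ Nat.factorial ⌊1 / ε⌋₊, ?_, ?_⟩⟩
  · rw [Ne, pow_eq_one_iff_left (Nat.factorial_ne_zero _)]
    exact FreeGroup.of_ne_one 0
  · rintro G _ _ ⟨g, hg⟩ f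
    have hcard : ε * Nat.card G ≤ Nat.card (⊥ : Subgroup G) := by
      have hG : (0 : ℝ) < Nat.card G := by exact_mod_cast Nat.card_pos
      rwa [Subgroup.card_bot, Nat.cast_one, ← le_div_iff₀ hG, ← wordProb_of i g]
    rw [map_pow, FreeGroup.lift_apply_of]
    exact pow_factorial_mem_of_mul_card_le hε hcard (f 0)

theorem IsGood.pcomm_map_castSucc {k : ℕ} {w : FreeGroup (Fin k)} (hw : IsGood w) :
    IsGood (pcomm (FreeGroup.map Fin.castSucc w) (FreeGroup.of (Fin.last k))) := by
  refine ⟨by simpa only [pow_one] using pcomm_map_castSucc_ne_one hw.1 one_ne_zero, fun ε hε => ?_⟩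
  obtain ⟨m, v, hv, v_identity⟩ := hw.2 (ε / 2) (half_pos hε)
  let n := Nat.factorial ⌊1 / (ε / 2)⌋₊
  have hn : n ≠ 0 := Nat.factorial_ne_zero _
  refine ⟨m + 1, _, pcomm_map_castSucc_ne_one hv hn, ?_⟩
  rintro G _ _ ⟨g, hg⟩ f
  have hquot : ε / 2 ≤ wordProb w (1 : G ⧸ powCentralizer G n) := by
    linarith [wordProb_pcomm_map_castSucc_le w g (half_pos hε)]
  have hmem : FreeGroup.lift (Fin.init f) v ∈ powCentralizer G n := by
    rw [← QuotientGroup.eq_one_iff, ← QuotientGroup.mk'_apply, map_lift_apply]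
    exact v_identity _ ⟨1, hquot⟩ _
  rw [lift_pcomm_map_castSucc, pcomm_eq_one_iff_commute]
  exact mem_powCentralizer.1 hmem _

/-- For every `k ≥ 1`, the left-normed commutator word
`w_k = [x₁, …, x_k]` is good. -/
theorem stmt8 (k : ℕ) (hk : 1 ≤ k) : IsGood (commWord k) := by
  induction k, hk using Nat.le_induction with
  | base => exact isGood_of 0
  | succ k hk ih =>
    obtain ⟨j, rfl⟩ := Nat.exists_eq_add_of_le' hk
    exact ih.pcomm_map_castSucc
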